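/- Let U = X_{i,j} and V = X_{k,ℓ} be distinct indecomposable representations of Q_ε. Then (U,V) is an exceptional pair and (V,U) is not an exceptional pair if and only if the chords {i,j} and {k,ℓ} share an endpoint and {i,j} is clockwise from {k,ℓ}. -/

import Mathlib

namespace ESPaper

/-- Source of arrow `a m` (between vertices `m` and `m+1`): `m` if `ε m = +` (true). -/
def asrc (ε : ℕ → Bool) (m : ℕ) : ℕ := if ε m then m else m + 1

/-- Target of arrow `a m`. -/
def atgt (ε : ℕ → Bool) (m : ℕ) : ℕ := if ε m then m + 1 else m

/-- A representation of the type `A_n` quiver `Q_ε`: finite dimensional vector spaces at the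
vertices `1, …, n` (the spaces at the remaining indices are required to be trivial, so that
the maps attached to indices outside `1, …, n-1` carry no information) together with a
linear map along each arrow `a m : asrc ε m → atgt ε m`, `1 ≤ m ≤ n-1`. -/
structure Rep (K : Type) [Field K] (n : ℕ) (ε : ℕ → Bool) : Type 1 where
  V : ℕ → Type
  [instAdd : ∀ m, AddCommGroup (V m)]
  [instMod : ∀ m, Module K (V m)]
  [instFin : ∀ m, FiniteDimensional K (V m)]
  triv : ∀ m, m = 0 ∨ n < m → Subsingleton (V m)
  φ : ∀ m, V (asrc ε m) →ₗ[K] V (atgt ε m)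

attribute [instance] Rep.instAdd Rep.instMod Rep.instFin

/-- A morphism of representations of `Q_ε`. -/
structure RepHom {K : Type} [Field K] {n : ℕ} {ε : ℕ → Bool} (A B : Rep K n ε) where
  app : ∀ m, A.V m →ₗ[K] B.V m
  comm : ∀ m, (app (atgt ε m)).comp (A.φ m) = (B.φ m).comp (app (asrc ε m))

/-- Vertex space of the indecomposable `X_{i,j}` (for `0 ≤ i < j ≤ n`): `K` at the
vertices `i+1, …, j` and `0` elsewhere. -/
def XV (K : Type) [Field K] (n i j m : ℕ) : Submodule K K :=
  if i + 1 ≤ m ∧ m ≤ j ∧ m ≤ n then ⊤ else ⊥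

/-- Arrow map of the indecomposable `X_{i,j}`: the identity whenever both endpoints of the
arrow lie in the support, and zero otherwise. -/
def Xφ (K : Type) [Field K] (n : ℕ) (ε : ℕ → Bool) (i j m : ℕ) :
    XV K n i j (asrc ε m) →ₗ[K] XV K n i j (atgt ε m) :=
  if h : i + 1 ≤ atgt ε m ∧ atgt ε m ≤ j ∧ atgt ε m ≤ n then
    LinearMap.codRestrict _ (XV K n i j (asrc ε m)).subtype
      (fun x => by simp [XV, h.1, h.2.1, h.2.2])
  else 0

/-- The indecomposable representation `X_{i,j}` of `Q_ε`. -/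
def Xrep (K : Type) [Field K] (n : ℕ) (ε : ℕ → Bool) (i j : ℕ) : Rep K n ε where
  V m := XV K n i j m
  instAdd _ := inferInstance
  instMod _ := inferInstance
  instFin _ := inferInstance
  triv m hm := by
    have hneg : ¬ (i + 1 ≤ m ∧ m ≤ j ∧ m ≤ n) := by omega
    have hbot : XV K n i j m = ⊥ := by unfold XV; rw [if_neg hneg]
    show Subsingleton (XV K n i j m)
    rw [hbot]
    infer_instance
  φ m := Xφ K n ε i j m

variable {K : Type} [Field K]

/-- `Hom(A, B) = 0`. -/
def homZero {n : ℕ} {ε : ℕ → Bool} (A B : Rep K n ε) : Prop :=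
  ∀ θ : RepHom A B, ∀ m, θ.app m = 0

/-- `Hom(A, B) ≠ 0`. -/
def homNonzero {n : ℕ} {ε : ℕ → Bool} (A B : Rep K n ε) : Prop :=
  ∃ θ : RepHom A B, ∃ m, θ.app m ≠ 0

/-- `0 → B → E → A → 0` is a short exact sequence. -/
def IsSES {n : ℕ} {ε : ℕ → Bool} {B E A : Rep K n ε}
    (f : RepHom B E) (g : RepHom E A) : Prop :=
  (∀ m, Function.Injective (f.app m)) ∧ (∀ m, Function.Surjective (g.app m)) ∧
    (∀ m, LinearMap.range (f.app m) = LinearMap.ker (g.app m))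

/-- The short exact sequence `0 → B → E → A → 0` splits. -/
def Splits {n : ℕ} {ε : ℕ → Bool} {E A : Rep K n ε} (g : RepHom E A) : Prop :=
  ∃ s : RepHom A E, ∀ m, (g.app m).comp (s.app m) = LinearMap.id

/-- `Ext¹(A, B) ≠ 0`: there is a nonsplit short exact sequence `0 → B → E → A → 0`. -/
def extNonzero {n : ℕ} {ε : ℕ → Bool} (A B : Rep K n ε) : Prop :=
  ∃ (E : Rep K n ε) (f : RepHom B E) (g : RepHom E A), IsSES f g ∧ ¬ Splits g

/-- `Ext¹(A, B) = 0`. -/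
def extZero {n : ℕ} {ε : ℕ → Bool} (A B : Rep K n ε) : Prop := ¬ extNonzero A B

/-- `(U, V)` is an exceptional pair: `Hom(V,U) = 0` and `Ext¹(V,U) = 0`. -/
def ExcPair {n : ℕ} {ε : ℕ → Bool} (U V : Rep K n ε) : Prop := homZero V U ∧ extZero V U


/-- The chords `c = {c.1, c.2}` and `d = {d.1, d.2}` (with `c.1 < c.2`, `d.1 < d.2`) cross. -/
def Crosses (ε : ℕ → Bool) (c d : ℕ × ℕ) : Prop :=
  (c.1 < d.1 ∧ d.1 < c.2 ∧ c.2 < d.2 ∧ ε d.1 = ε c.2) ∨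
  (d.1 < c.1 ∧ c.1 < d.2 ∧ d.2 < c.2 ∧ ε c.1 = ε d.2) ∨
  (c.1 < d.1 ∧ d.1 < d.2 ∧ d.2 < c.2 ∧ ε d.1 ≠ ε d.2) ∨
  (d.1 < c.1 ∧ c.1 < c.2 ∧ c.2 < d.2 ∧ ε c.1 ≠ ε c.2)

/-- The chords `c` and `d` share an endpoint. -/
def SharesEndpoint (c d : ℕ × ℕ) : Prop :=
  c.1 = d.1 ∨ c.1 = d.2 ∨ c.2 = d.1 ∨ c.2 = d.2

/-- The chord `c` is clockwise from the chord `d` (chords written with `c.1 < c.2`, `d.1 < d.2`). -/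
def Cw (ε : ℕ → Bool) (c d : ℕ × ℕ) : Prop :=
  (c.2 = d.1 ∧ ε c.2 = true) ∨
  (d.2 = c.1 ∧ ε c.1 = false) ∨
  (c.1 = d.1 ∧ ((c.2 < d.2 ∧ ε c.2 = false) ∨ (d.2 < c.2 ∧ ε d.2 = true))) ∨
  (c.2 = d.2 ∧ ((c.1 < d.1 ∧ ε d.1 = false) ∨ (d.1 < c.1 ∧ ε c.1 = true)))

/-- The graph on `{0,…,n} ⊆ ℕ` determined by a finite set of chords. -/
def chordGraph (d : Finset (ℕ × ℕ)) : SimpleGraph ℕ :=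
  SimpleGraph.fromEdgeSet {e : Sym2 ℕ | ∃ c ∈ d, e = s(c.1, c.2)}

/-- The graph on `{0,…,n} ⊆ ℕ` determined by a family of chords. -/
def chordGraphF {k : ℕ} (c : Fin k → ℕ × ℕ) : SimpleGraph ℕ :=
  SimpleGraph.fromEdgeSet {e : Sym2 ℕ | ∃ a : Fin k, e = s((c a).1, (c a).2)}

/-- `d` is a strand diagram on `S_{n,ε}`: valid pairwise-noncrossing chords forming a forest. -/
def IsDiagram (n : ℕ) (ε : ℕ → Bool) (d : Finset (ℕ × ℕ)) : Prop :=
  (∀ c ∈ d, c.1 < c.2 ∧ c.2 ≤ n) ∧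
  (∀ c ∈ d, ∀ c' ∈ d, ¬ Crosses ε c c') ∧
  (chordGraph d).IsAcyclic

/-- The family `c` is a strand diagram (pairwise-noncrossing chords forming a forest). -/
def IsDiagramF {k : ℕ} (ε : ℕ → Bool) (c : Fin k → ℕ × ℕ) : Prop :=
  (∀ a b : Fin k, ¬ Crosses ε (c a) (c b)) ∧ (chordGraphF c).IsAcyclic

/-- The partial order of the poset `P_d`: `x ≤ y` iff there is a chain of chords of `d`
from `x` to `y` in which each chord shares an endpoint with, and is clockwise from,
the previous one. -/
def leD (ε : ℕ → Bool) (d : Finset (ℕ × ℕ)) : ℕ × ℕ → ℕ × ℕ → Prop :=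
  Relation.ReflTransGen (fun x y => x ∈ d ∧ y ∈ d ∧ SharesEndpoint x y ∧ Cw ε y x)

/-!
Morphisms `A → B` and extensions of `A` by `B` are the kernel and the cokernel of the coboundary
`∏ₘ Hom(Aₘ, Bₘ) → ∏ₘ Hom(A_{asrc m}, B_{atgt m})`, so `(U, V)` is exceptional iff the coboundary
from `V` to `U` is bijective. For `V = X_{k,l}` and `U = X_{i,j}` it becomes the difference operator
of a path: its vertices are the overlap `(a, b]` of the supports, where `a = max i k` and
`b = min j l`, and its edges are the arrows `a_m` from the support of `V` to the support of `U`.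
All edges strictly between `a` and `b` are present, so only the two boundary arrows matter: when
`a < b`, the pair is exceptional iff exactly one of them is present. Exchanging `U` and `V`
exchanges presence and absence of a boundary arrow, except at a common endpoint, where it is absent
both times. Hence the two orders behave alike unless the chords share an endpoint.
-/

section Coboundary

variable {n : ℕ} {ε : ℕ → Bool} {A B E : Rep K n ε}

/-- The differential of the two-term complex computing `Hom(A, B)` and `Ext¹(A, B)`: it measures
the failure of a family of linear maps at the vertices to commute with the arrows. -/
def coboundary (A B : Rep K n ε) : (∀ m, A.V m →ₗ[K] B.V m) →ₗ[K]
    ∀ m, A.V (asrc ε m) →ₗ[K] B.V (atgt ε m) where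
  toFun h m := h (atgt ε m) ∘ₗ A.φ m - B.φ m ∘ₗ h (asrc ε m)
  map_add' h h' := by
    ext m v
    simp only [Pi.add_apply, LinearMap.sub_apply, LinearMap.add_apply, LinearMap.comp_apply,
      map_add]
    abel
  map_smul' r h := by
    ext m v
    simp [smul_sub]

theorem coboundary_apply (h : ∀ m, A.V m →ₗ[K] B.V m) (m : ℕ) :
    coboundary A B h m = h (atgt ε m) ∘ₗ A.φ m - B.φ m ∘ₗ h (asrc ε m) :=
  rfl

theorem homZero_iff_injective_coboundary :
    homZero A B ↔ Function.Injective (coboundary A B) := by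
  rw [injective_iff_map_eq_zero]
  constructor
  · intro hom_zero h hh
    exact funext (hom_zero ⟨h, fun m => sub_eq_zero.1 (congrFun hh m)⟩)
  · intro hinj θ
    exact congrFun (hinj θ.app (funext fun m => sub_eq_zero.2 (θ.comm m)))

/-- The extension of `A` by `B` with cocycle `c`: the direct sum `B ⊕ A` at every vertex, with
`c` added to the arrow maps as an off-diagonal term. -/
def twistedSum (c : ∀ m, A.V (asrc ε m) →ₗ[K] B.V (atgt ε m)) : Rep K n ε where
  V m := B.V m × A.V m
  triv m hm := by
    have := A.triv m hm
    have := B.triv m hm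
    infer_instance
  φ m := (B.φ m ∘ₗ LinearMap.fst K _ _ + c m ∘ₗ LinearMap.snd K _ _).prod
    (A.φ m ∘ₗ LinearMap.snd K _ _)

/-- The inclusion of the subobject `B` into the extension `twistedSum c`. -/
def twistedSumInl (c : ∀ m, A.V (asrc ε m) →ₗ[K] B.V (atgt ε m)) : RepHom B (twistedSum c) where
  app m := LinearMap.inl K (B.V m) (A.V m)
  comm m := LinearMap.ext fun v => Prod.ext
    (show B.φ m v = B.φ m v + c m 0 by rw [map_zero, add_zero]) (map_zero (A.φ m)).symm

/-- The projection of the extension `twistedSum c` onto the quotient `A`. -/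
def twistedSumSnd (c : ∀ m, A.V (asrc ε m) →ₗ[K] B.V (atgt ε m)) : RepHom (twistedSum c) A where
  app m := LinearMap.snd K (B.V m) (A.V m)
  comm _ := rfl

theorem isSES_twistedSum (c : ∀ m, A.V (asrc ε m) →ₗ[K] B.V (atgt ε m)) :
    IsSES (twistedSumInl c) (twistedSumSnd c) :=
  ⟨fun _ => LinearMap.inl_injective, fun _ => LinearMap.snd_surjective,
    fun _ => LinearMap.range_inl K _ _⟩

theorem exists_coboundary_eq_of_splits {c : ∀ m, A.V (asrc ε m) →ₗ[K] B.V (atgt ε m)}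
    (hc : Splits (twistedSumSnd c)) : ∃ h, coboundary A B h = c := by
  obtain ⟨s, hs⟩ := hc
  have snd_section (m : ℕ) (v : A.V m) : (s.app m v).2 = v := LinearMap.congr_fun (hs m) v
  refine ⟨fun m => LinearMap.fst K (B.V m) (A.V m) ∘ₗ s.app m, funext fun m => ?_⟩
  refine LinearMap.ext fun v => sub_eq_iff_eq_add'.2 ?_
  calc (s.app (atgt ε m) (A.φ m v)).1
      = B.φ m (s.app (asrc ε m) v).1 + c m (s.app (asrc ε m) v).2 :=
        congrArg Prod.fst (LinearMap.congr_fun (s.comm m) v)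
    _ = B.φ m (s.app (asrc ε m) v).1 + c m v := by rw [snd_section]

theorem exists_cocycle_of_section {f : RepHom B E} {g : RepHom E A} (hfg : IsSES f g)
    {s : ∀ m, A.V m →ₗ[K] E.V m} (hs : ∀ m, g.app m ∘ₗ s m = LinearMap.id) :
    ∃ c : ∀ m, A.V (asrc ε m) →ₗ[K] B.V (atgt ε m), ∀ m,
      f.app (atgt ε m) ∘ₗ c m = E.φ m ∘ₗ s (asrc ε m) - s (atgt ε m) ∘ₗ A.φ m := by
  obtain ⟨hf, -, hexact⟩ := hfg
  have defect_mem_range (m : ℕ) (v : A.V (asrc ε m)) :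
      (E.φ m ∘ₗ s (asrc ε m) - s (atgt ε m) ∘ₗ A.φ m) v ∈ (f.app (atgt ε m)).range := by
    rw [hexact, LinearMap.mem_ker, ← LinearMap.comp_apply, LinearMap.comp_sub,
      ← LinearMap.comp_assoc, ← LinearMap.comp_assoc, hs, g.comm, LinearMap.comp_assoc, hs,
      LinearMap.comp_id, LinearMap.id_comp, sub_self, LinearMap.zero_apply]
  exact ⟨fun m => LinearMap.codRestrictOfInjective _ _ (hf _) (defect_mem_range m),
    fun m => LinearMap.codRestrictOfInjective_comp ..⟩

theorem splits_of_surjective_coboundary (hsurj : Function.Surjective (coboundary A B))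
    {f : RepHom B E} {g : RepHom E A} (hfg : IsSES f g) : Splits g := by
  have hsection (m : ℕ) : ∃ s : A.V m →ₗ[K] E.V m, g.app m ∘ₗ s = LinearMap.id :=
    (g.app m).exists_rightInverse_of_surjective (LinearMap.range_eq_top.2 (hfg.2.1 m))
  choose s hs using hsection
  obtain ⟨c, hc⟩ := exists_cocycle_of_section hfg hs
  obtain ⟨h, rfl⟩ := hsurj c
  have g_comp_f (m : ℕ) : g.app m ∘ₗ f.app m = 0 := LinearMap.range_le_ker_iff.1 (hfg.2.2 m).le
  refine ⟨⟨fun m => s m + f.app m ∘ₗ h m, fun m => ?_⟩, fun m => ?_⟩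
  · have hcorr := hc m
    rw [coboundary_apply, LinearMap.comp_sub, ← LinearMap.comp_assoc _ _ (f.app _),
      ← LinearMap.comp_assoc _ _ (f.app _), f.comm, sub_eq_sub_iff_add_eq_add] at hcorr
    rw [LinearMap.add_comp, LinearMap.comp_add, add_comm, hcorr, LinearMap.comp_assoc]
  · rw [LinearMap.comp_add, hs, ← LinearMap.comp_assoc, g_comp_f, LinearMap.zero_comp, add_zero]

theorem extZero_iff_surjective_coboundary :
    extZero A B ↔ Function.Surjective (coboundary A B) := by
  constructor
  · intro ext_zero c
    refine exists_coboundary_eq_of_splits (by_contra fun hsplit => ext_zero ?_)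
    exact ⟨twistedSum c, twistedSumInl c, twistedSumSnd c, isSES_twistedSum c, hsplit⟩
  · rintro hsurj ⟨E, f, g, hfg, hsplit⟩
    exact hsplit (splits_of_surjective_coboundary hsurj hfg)

end Coboundary

section ScalarMaps

/-- Multiplication by a scalar of `p ⊓ q`, as a map `p → q` between ideals of the field `K`. As
each ideal is `⊥` or `⊤`, this parametrises all linear maps `p → q`. -/
def mulHom {p q : Submodule K K} (x : ↥(p ⊓ q)) : p →ₗ[K] q :=
  (LinearMap.mulLeft K (x : K)).restrict fun v _ => Ideal.mul_mem_right v q x.2.2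

@[simp]
theorem coe_mulHom_apply {p q : Submodule K K} (x : ↥(p ⊓ q)) (v : p) :
    (mulHom x v : K) = x * v :=
  rfl

@[simp]
theorem mulHom_zero {p q : Submodule K K} : mulHom (0 : ↥(p ⊓ q)) = 0 := by
  ext v
  simp

theorem mulHom_injective {p q : Submodule K K} :
    Function.Injective (mulHom : ↥(p ⊓ q) → p →ₗ[K] q) := by
  intro x y hxy
  obtain rfl | rfl := eq_bot_or_eq_top p
  · exact Subtype.ext (x.2.1.trans y.2.1.symm)
  · have at_one := congrArg Subtype.val (LinearMap.congr_fun hxy ⟨1, trivial⟩)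
    simpa using at_one

theorem mulHom_surjective {p q : Submodule K K} :
    Function.Surjective (mulHom : ↥(p ⊓ q) → p →ₗ[K] q) := by
  intro T
  obtain rfl | rfl := eq_bot_or_eq_top p
  · exact ⟨0, Subsingleton.elim _ _⟩
  · refine ⟨⟨T ⟨1, trivial⟩, trivial, (T ⟨1, trivial⟩).2⟩, LinearMap.ext fun v => ?_⟩
    have hv : v = (v : K) • (⟨1, trivial⟩ : (⊤ : Submodule K K)) := Subtype.ext (by simp)
    conv_rhs => rw [hv, map_smul]
    exact Subtype.ext (by simp [mul_comm])

end ScalarMaps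

section IntervalModules

variable {n : ℕ} {ε : ℕ → Bool} {i j k l m : ℕ}

theorem XV_eq_top (hjn : j ≤ n) (hm : m ∈ Set.Ioc i j) : XV K n i j m = ⊤ :=
  if_pos ⟨hm.1, hm.2, hm.2.trans hjn⟩

theorem XV_eq_bot (hm : m ∉ Set.Ioc i j) : XV K n i j m = ⊥ :=
  if_neg fun h => hm ⟨h.1, h.2.1⟩

theorem mem_XV_iff (hjn : j ≤ n) {x : K} : x ∈ XV K n i j m ↔ (m ∉ Set.Ioc i j → x = 0) := by
  by_cases hm : m ∈ Set.Ioc i j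
  · simp [XV_eq_top hjn hm, hm]
  · simp [XV_eq_bot hm, hm]

theorem mem_XV_inf_XV_iff (hjn : j ≤ n) (hln : l ≤ n) {x : K} :
    x ∈ XV K n k l m ⊓ XV K n i j m ↔ (m ∉ Set.Ioc (max i k) (min j l) → x = 0) := by
  rw [Submodule.mem_inf, mem_XV_iff hln, mem_XV_iff hjn, ← Set.Ioc_inter_Ioc, Set.mem_inter_iff]
  tauto

theorem coe_Xφ_apply (hjn : j ≤ n) (hm : atgt ε m ∈ Set.Ioc i j) (v : XV K n i j (asrc ε m)) :
    (Xφ K n ε i j m v : K) = v := by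
  rw [Xφ, dif_pos ⟨hm.1, hm.2, hm.2.trans hjn⟩]
  rfl

theorem mul_coe_Xφ_apply (hjn : j ≤ n) {x : K} (hx : x ∈ XV K n i j (atgt ε m))
    (v : XV K n i j (asrc ε m)) : x * (Xφ K n ε i j m v : K) = x * v := by
  by_cases hm : atgt ε m ∈ Set.Ioc i j
  · rw [coe_Xφ_apply hjn hm]
  · rw [(mem_XV_iff hjn).1 hx hm, zero_mul, zero_mul]

/-- The indices `m` of the arrows `a_m` that lead from the support of `X_{k,l}` to the support of
`X_{i,j}`. They are the coordinates of the target of the coboundary from `X_{k,l}` to `X_{i,j}`. -/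
def connectingArrows (ε : ℕ → Bool) (k l i j : ℕ) : Set ℕ :=
  {m | asrc ε m ∈ Set.Ioc k l ∧ atgt ε m ∈ Set.Ioc i j}

theorem mem_connectingArrows_iff :
    m ∈ connectingArrows ε k l i j ↔
      if ε m then (k < m ∧ m ≤ l) ∧ i ≤ m ∧ m < j else (k ≤ m ∧ m < l) ∧ i < m ∧ m ≤ j := by
  cases hm : ε m <;> simp [connectingArrows, asrc, atgt, hm]

theorem connectingArrows_subset_Icc :
    connectingArrows ε k l i j ⊆ Set.Icc (max i k) (min j l) := by
  intro m hm
  rw [mem_connectingArrows_iff] at hm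
  rw [Set.mem_Icc]
  split_ifs at hm <;> omega

theorem Ioo_subset_connectingArrows :
    Set.Ioo (max i k) (min j l) ⊆ connectingArrows ε k l i j := by
  intro m hm
  rw [Set.mem_Ioo] at hm
  rw [mem_connectingArrows_iff]
  split_ifs <;> omega

theorem mem_XV_inf_XV_of_mem_connectingArrows (hjn : j ≤ n) (hln : l ≤ n)
    (hm : m ∈ connectingArrows ε k l i j) (x : K) :
    x ∈ XV K n k l (asrc ε m) ⊓ XV K n i j (atgt ε m) := by
  rw [XV_eq_top hln hm.1, XV_eq_top hjn hm.2]
  trivial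

theorem subsingleton_hom_of_notMem_connectingArrows (hm : m ∉ connectingArrows ε k l i j) :
    Subsingleton (XV K n k l (asrc ε m) →ₗ[K] XV K n i j (atgt ε m)) := by
  obtain hsrc | htgt := not_and_or.1 hm
  · rw [XV_eq_bot hsrc]
    infer_instance
  · rw [XV_eq_bot htgt]
    infer_instance

/-- The coboundary from `X_{k,l}` to `X_{i,j}`, with the vertex spaces displayed as submodules of
`K` so that their elements can be compared as scalars. -/
def intervalCoboundary (K : Type) [Field K] (n : ℕ) (ε : ℕ → Bool) (k l i j : ℕ) :
    (∀ m, XV K n k l m →ₗ[K] XV K n i j m) →ₗ[K]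
      ∀ m, XV K n k l (asrc ε m) →ₗ[K] XV K n i j (atgt ε m) :=
  coboundary (Xrep K n ε k l) (Xrep K n ε i j)

theorem coe_intervalCoboundary_apply (h : ∀ m, XV K n k l m →ₗ[K] XV K n i j m)
    (v : XV K n k l (asrc ε m)) :
    (intervalCoboundary K n ε k l i j h m v : K) =
      h (atgt ε m) (Xφ K n ε k l m v) - Xφ K n ε i j m (h (asrc ε m) v) :=
  rfl

theorem coe_intervalCoboundary_mulHom_apply (hjn : j ≤ n) (hln : l ≤ n)
    (x : ∀ m, ↥(XV K n k l m ⊓ XV K n i j m)) (hm : atgt ε m ∈ Set.Ioc i j)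
    (v : XV K n k l (asrc ε m)) :
    (intervalCoboundary K n ε k l i j (fun m => mulHom (x m)) m v : K) =
      ((x (atgt ε m) : K) - x (asrc ε m)) * v := by
  rw [coe_intervalCoboundary_apply, coe_mulHom_apply, mul_coe_Xφ_apply hln (x (atgt ε m)).2.1,
    coe_Xφ_apply hjn hm, coe_mulHom_apply, sub_mul]

theorem intervalCoboundary_mulHom_eq_iff (hjn : j ≤ n) (hln : l ≤ n)
    (x : ∀ m, ↥(XV K n k l m ⊓ XV K n i j m))
    (d : ∀ m, ↥(XV K n k l (asrc ε m) ⊓ XV K n i j (atgt ε m))) :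
    intervalCoboundary K n ε k l i j (fun m => mulHom (x m)) = (fun m => mulHom (d m)) ↔
      ∀ m ∈ connectingArrows ε k l i j, (x (atgt ε m) : K) - x (asrc ε m) = d m := by
  rw [funext_iff]
  refine forall_congr' fun m => ?_
  by_cases hm : m ∈ connectingArrows ε k l i j
  · have coboundary_eq : intervalCoboundary K n ε k l i j (fun m => mulHom (x m)) m =
        mulHom ⟨_, mem_XV_inf_XV_of_mem_connectingArrows hjn hln hm _⟩ :=
      LinearMap.ext fun v => Subtype.ext (coe_intervalCoboundary_mulHom_apply hjn hln x hm.2 v)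
    rw [coboundary_eq, mulHom_injective.eq_iff, Subtype.ext_iff, imp_iff_right hm]
  · have := subsingleton_hom_of_notMem_connectingArrows (K := K) (n := n) hm
    exact iff_of_true (Subsingleton.elim _ _) fun h => absurd h hm

theorem atgt_sub_asrc_eq_iff {M : Type*} [AddCommGroup M] (x : ℕ → M) (c : M) :
    x (atgt ε m) - x (asrc ε m) = c ↔ x (m + 1) - x m = if ε m then c else -c := by
  cases hm : ε m
  · simp [asrc, atgt, hm, ← neg_eq_iff_eq_neg]
  · simp [asrc, atgt, hm]

theorem exists_mulHom_eq (hjn : j ≤ n) (hln : l ≤ n) (h : ∀ m, XV K n k l m →ₗ[K] XV K n i j m) :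
    ∃ x : ∀ m, ↥(XV K n k l m ⊓ XV K n i j m), (fun m => mulHom (x m)) = h ∧
      Function.support (fun m => (x m : K)) ⊆ Set.Ioc (max i k) (min j l) := by
  choose x hx using fun m => mulHom_surjective (h m)
  exact ⟨x, funext hx,
    Function.support_subset_iff'.2 fun m => (mem_XV_inf_XV_iff hjn hln).1 (x m).2⟩

theorem intervalCoboundary_mulHom_eq_zero_iff (hjn : j ≤ n) (hln : l ≤ n)
    (x : ∀ m, ↥(XV K n k l m ⊓ XV K n i j m)) :
    intervalCoboundary K n ε k l i j (fun m => mulHom (x m)) = 0 ↔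
      ∀ m ∈ connectingArrows ε k l i j, (x (m + 1) : K) = x m := by
  have mulHom_zero_family : (fun m => mulHom 0) =
      (0 : ∀ m, XV K n k l (asrc ε m) →ₗ[K] XV K n i j (atgt ε m)) :=
    funext fun _ => mulHom_zero
  rw [← mulHom_zero_family, intervalCoboundary_mulHom_eq_iff hjn hln x fun _ => 0]
  simp [atgt_sub_asrc_eq_iff (fun m => (x m : K)), sub_eq_zero]

theorem homZero_Xrep_iff_forall_scalar (hjn : j ≤ n) (hln : l ≤ n) :
    homZero (Xrep K n ε k l) (Xrep K n ε i j) ↔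
      ∀ x : ℕ → K, Function.support x ⊆ Set.Ioc (max i k) (min j l) →
        (∀ m ∈ connectingArrows ε k l i j, x (m + 1) = x m) → x = 0 := by
  rw [homZero_iff_injective_coboundary]
  change Function.Injective (intervalCoboundary K n ε k l i j) ↔ _
  rw [injective_iff_map_eq_zero]
  constructor
  · intro hinj x hx hconst
    let y (m : ℕ) : ↥(XV K n k l m ⊓ XV K n i j m) :=
      ⟨x m, (mem_XV_inf_XV_iff hjn hln).2 (Function.support_subset_iff'.1 hx m)⟩
    have hy := hinj _ ((intervalCoboundary_mulHom_eq_zero_iff hjn hln y).2 hconst)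
    funext m
    exact congrArg Subtype.val (mulHom_injective ((congrFun hy m).trans mulHom_zero.symm))
  · intro hscalar h hh
    obtain ⟨y, rfl, hsupport⟩ := exists_mulHom_eq hjn hln h
    have hconst := (intervalCoboundary_mulHom_eq_zero_iff hjn hln y).1 hh
    obtain rfl : y = 0 := funext fun m => Subtype.ext (congrFun (hscalar _ hsupport hconst) m)
    exact funext fun _ => mulHom_zero

theorem extZero_Xrep_iff_forall_scalar (hjn : j ≤ n) (hln : l ≤ n) :
    extZero (Xrep K n ε k l) (Xrep K n ε i j) ↔
      ∀ c : ℕ → K, ∃ x : ℕ → K, Function.support x ⊆ Set.Ioc (max i k) (min j l) ∧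
        ∀ m ∈ connectingArrows ε k l i j, x (m + 1) - x m = c m := by
  classical
  have orient_involutive :
      Function.Involutive fun (c : ℕ → K) m => if ε m then c m else -c m := by
    intro c
    funext m
    cases hm : ε m <;> simp [hm]
  rw [extZero_iff_surjective_coboundary, orient_involutive.surjective.forall]
  change Function.Surjective (intervalCoboundary K n ε k l i j) ↔ _
  simp only [← atgt_sub_asrc_eq_iff]
  constructor
  · intro hsurj c
    let d (m : ℕ) : ↥(XV K n k l (asrc ε m) ⊓ XV K n i j (atgt ε m)) :=
      if hm : m ∈ connectingArrows ε k l i j then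
        ⟨c m, mem_XV_inf_XV_of_mem_connectingArrows hjn hln hm _⟩ else 0
    obtain ⟨h, hh⟩ := hsurj fun m => mulHom (d m)
    obtain ⟨y, rfl, hsupport⟩ := exists_mulHom_eq hjn hln h
    refine ⟨fun m => y m, hsupport, fun m hm => ?_⟩
    rw [(intervalCoboundary_mulHom_eq_iff hjn hln y d).1 hh m hm]
    simp only [d, dif_pos hm]
  · intro hscalar c
    choose d hd using fun m => mulHom_surjective (c m)
    obtain rfl : (fun m => mulHom (d m)) = c := funext hd
    obtain ⟨x, hx, hdiff⟩ := hscalar fun m => d m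
    let y (m : ℕ) : ↥(XV K n k l m ⊓ XV K n i j m) :=
      ⟨x m, (mem_XV_inf_XV_iff hjn hln).2 (Function.support_subset_iff'.1 hx m)⟩
    exact ⟨fun m => mulHom (y m), (intervalCoboundary_mulHom_eq_iff hjn hln y d).2 hdiff⟩

end IntervalModules

section PathDifference

variable {M : Type*} [AddCommGroup M] {a b : ℕ} {E : Set ℕ}

theorem eq_of_forall_succ_eq {x : ℕ → M} (hab : a ≤ b)
    (hx : ∀ m ∈ Set.Ico a b, x (m + 1) = x m) : x b = x a := by
  rw [← sub_eq_zero, ← Finset.sum_Ico_sub x hab]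
  exact Finset.sum_eq_zero fun m hm => sub_eq_zero.2 (hx m (Finset.mem_Ico.1 hm))

theorem eq_zero_of_forall_succ_eq (hE : Set.Ioo a b ⊆ E) (hbdry : b ≤ a ∨ a ∈ E ∨ b ∈ E)
    {x : ℕ → M} (hx : Function.support x ⊆ Set.Ioc a b)
    (hconst : ∀ m ∈ E, x (m + 1) = x m) : x = 0 := by
  have vanish := Function.support_subset_iff'.1 hx
  funext m
  by_cases hm : m ∈ Set.Ioc a b
  · obtain ⟨ham, hmb⟩ := hm
    obtain hba | ha | hb := hbdry
    · omega
    · calc x m = x a := eq_of_forall_succ_eq ham.le fun r hr => hconst r <| by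
            obtain rfl | har := hr.1.eq_or_lt
            · exact ha
            · exact hE ⟨har, hr.2.trans_le hmb⟩
        _ = 0 := vanish a (by simp)
    · calc x m = x (b + 1) := .symm <| eq_of_forall_succ_eq (by omega) fun r hr => hconst r <| by
            obtain rfl | hrb := (Nat.lt_succ_iff.1 hr.2).eq_or_lt
            · exact hb
            · exact hE ⟨ham.trans_le hr.1, hrb⟩
        _ = 0 := vanish (b + 1) (by simp)
  · exact vanish m hm

theorem forall_succ_eq_imp_eq_zero_iff [Nontrivial M] (hE : Set.Ioo a b ⊆ E)
    (hE' : E ⊆ Set.Icc a b) :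
    (∀ x : ℕ → M, Function.support x ⊆ Set.Ioc a b → (∀ m ∈ E, x (m + 1) = x m) → x = 0) ↔
      b ≤ a ∨ a ∈ E ∨ b ∈ E := by
  refine ⟨fun h => ?_, fun hbdry _ => eq_zero_of_forall_succ_eq hE hbdry⟩
  by_contra! hbdry
  obtain ⟨hab, ha, hb⟩ := hbdry
  obtain ⟨v, hv⟩ := exists_ne (0 : M)
  have indicator_eq_zero := h ((Set.Ioc a b).indicator fun _ => v) Set.support_indicator_subset
    fun m hm => by
      have hma : m ≠ a := fun h => ha (h ▸ hm)
      have hmb : m ≠ b := fun h => hb (h ▸ hm)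
      obtain ⟨ham, hmb'⟩ := hE' hm
      have hm_mem : m ∈ Set.Ioc a b := ⟨by omega, by omega⟩
      have hsucc_mem : m + 1 ∈ Set.Ioc a b := ⟨by omega, by omega⟩
      rw [Set.indicator_of_mem hm_mem, Set.indicator_of_mem hsucc_mem]
  have at_b := congrFun indicator_eq_zero b
  rw [Set.indicator_of_mem (Set.right_mem_Ioc.2 hab)] at at_b
  exact hv at_b

theorem exists_succ_sub_eq (hE : E ⊆ Set.Icc a b) (hbdry : ¬(a ∈ E ∧ b ∈ E)) (c : ℕ → M) :
    ∃ x : ℕ → M, Function.support x ⊆ Set.Ioc a b ∧ ∀ m ∈ E, x (m + 1) - x m = c m := by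
  -- An antiderivative of `c` can be normalised to vanish at one end `p` of the path, chosen so that
  -- no edge of `E` reaches the other end.
  obtain ⟨p, hp⟩ : ∃ p, ∀ m ∈ E,
      (m ∈ Set.Ioc a b ∨ m = p) ∧ (m + 1 ∈ Set.Ioc a b ∨ m + 1 = p) := by
    simp only [Set.mem_Ioc]
    by_cases ha : a ∈ E
    · refine ⟨a, fun m hm => ?_⟩
      have hmb : m ≠ b := fun h => hbdry ⟨ha, h ▸ hm⟩
      have := Set.mem_Icc.1 (hE hm)
      omega
    · refine ⟨b + 1, fun m hm => ?_⟩
      have hma : m ≠ a := fun h => ha (h ▸ hm)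
      have := Set.mem_Icc.1 (hE hm)
      omega
  let F (m : ℕ) : M := ∑ r ∈ Finset.range m, c r - ∑ r ∈ Finset.range p, c r
  have indicator_eq (m : ℕ) (hm : m ∈ Set.Ioc a b ∨ m = p) :
      (Set.Ioc a b).indicator F m = F m := by
    obtain hm | rfl := hm
    · exact Set.indicator_of_mem hm F
    · simp [F, Set.indicator_apply]
  refine ⟨(Set.Ioc a b).indicator F, Set.support_indicator_subset, fun m hm => ?_⟩
  rw [indicator_eq m (hp m hm).1, indicator_eq (m + 1) (hp m hm).2]
  simp [F, Finset.sum_range_succ]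

theorem forall_exists_succ_sub_eq_iff [Nontrivial M] (hE : Set.Ioo a b ⊆ E)
    (hE' : E ⊆ Set.Icc a b) :
    (∀ c : ℕ → M, ∃ x : ℕ → M, Function.support x ⊆ Set.Ioc a b ∧
      ∀ m ∈ E, x (m + 1) - x m = c m) ↔ ¬(a ∈ E ∧ b ∈ E) := by
  refine ⟨?_, exists_succ_sub_eq hE'⟩
  rintro h ⟨ha, hb⟩
  obtain ⟨v, hv⟩ := exists_ne (0 : M)
  obtain ⟨x, hx, hdiff⟩ := h (Pi.single a v)
  have vanish := Function.support_subset_iff'.1 hx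
  have hab : a ≤ b := (hE' ha).2
  have mem_E : ∀ m ∈ Finset.Ico a (b + 1), m ∈ E := by
    intro m hm
    rw [Finset.mem_Ico] at hm
    obtain rfl | ham := hm.1.eq_or_lt
    · exact ha
    obtain rfl | hmb := (Nat.lt_succ_iff.1 hm.2).eq_or_lt
    · exact hb
    exact hE ⟨ham, hmb⟩
  apply hv
  calc v = ∑ m ∈ Finset.Ico a (b + 1), Pi.single (M := fun _ => M) a v m := by
        simp [Finset.sum_pi_single', hab]
    _ = ∑ m ∈ Finset.Ico a (b + 1), (x (m + 1) - x m) :=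
        Finset.sum_congr rfl fun m hm => (hdiff m (mem_E m hm)).symm
    _ = x (b + 1) - x a := Finset.sum_Ico_sub x (by omega)
    _ = 0 := by rw [vanish (b + 1) (by simp), vanish a (by simp), sub_zero]

end PathDifference

section ExceptionalPairs

variable {n : ℕ} {ε : ℕ → Bool} {i j k l : ℕ}

theorem homZero_Xrep_iff (hjn : j ≤ n) (hln : l ≤ n) :
    homZero (Xrep K n ε k l) (Xrep K n ε i j) ↔
      min j l ≤ max i k ∨ max i k ∈ connectingArrows ε k l i j ∨
        min j l ∈ connectingArrows ε k l i j :=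
  (homZero_Xrep_iff_forall_scalar hjn hln).trans <|
    forall_succ_eq_imp_eq_zero_iff Ioo_subset_connectingArrows connectingArrows_subset_Icc

theorem extZero_Xrep_iff (hjn : j ≤ n) (hln : l ≤ n) :
    extZero (Xrep K n ε k l) (Xrep K n ε i j) ↔
      ¬(max i k ∈ connectingArrows ε k l i j ∧ min j l ∈ connectingArrows ε k l i j) :=
  (extZero_Xrep_iff_forall_scalar hjn hln).trans <|
    forall_exists_succ_sub_eq_iff Ioo_subset_connectingArrows connectingArrows_subset_Icc

theorem excPair_Xrep_of_disjoint (hjn : j ≤ n) (hln : l ≤ n) (hlt : min j l < max i k) :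
    ExcPair (Xrep K n ε i j) (Xrep K n ε k l) := by
  refine ⟨(homZero_Xrep_iff hjn hln).2 (.inl hlt.le), (extZero_Xrep_iff hjn hln).2 fun h => ?_⟩
  have := connectingArrows_subset_Icc h.1
  exact hlt.not_ge (this.1.trans this.2)

theorem excPair_Xrep_adjacent_right_iff (hij : i < j) (hjl : j < l) (hln : l ≤ n) :
    ExcPair (Xrep K n ε i j) (Xrep K n ε j l) ↔ ε j = true := by
  rw [ExcPair, homZero_Xrep_iff (hjl.le.trans hln) hln, extZero_Xrep_iff (hjl.le.trans hln) hln,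
    max_eq_right hij.le, min_eq_left hjl.le, mem_connectingArrows_iff]
  simp [hij, hjl]

theorem excPair_Xrep_adjacent_left_iff (hij : i < j) (hjl : j < l) (hln : l ≤ n) :
    ExcPair (Xrep K n ε j l) (Xrep K n ε i j) ↔ ε j = false := by
  rw [ExcPair, homZero_Xrep_iff hln (hjl.le.trans hln), extZero_Xrep_iff hln (hjl.le.trans hln),
    max_eq_left hij.le, min_eq_right hjl.le, mem_connectingArrows_iff]
  simp [hij, hjl]

theorem excPair_Xrep_iff_xor (hjn : j ≤ n) (hln : l ≤ n) (hlt : max i k < min j l) :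
    ExcPair (Xrep K n ε i j) (Xrep K n ε k l) ↔
      Xor (max i k ∈ connectingArrows ε k l i j) (min j l ∈ connectingArrows ε k l i j) := by
  rw [ExcPair, homZero_Xrep_iff hjn hln, extZero_Xrep_iff hjn hln, xor_iff_or_and_not_and,
    or_iff_right hlt.not_ge]

theorem max_mem_connectingArrows_iff (hlt : max i k < min j l) :
    max i k ∈ connectingArrows ε k l i j ↔ if ε (max i k) then k < i else i < k := by
  rw [mem_connectingArrows_iff]
  split_ifs <;> omega

theorem min_mem_connectingArrows_iff (hlt : max i k < min j l) :
    min j l ∈ connectingArrows ε k l i j ↔ if ε (min j l) then l < j else j < l := by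
  rw [mem_connectingArrows_iff]
  split_ifs <;> omega

theorem excPair_Xrep_comm (hjn : j ≤ n) (hln : l ≤ n) (hlt : max i k < min j l) (hik : i ≠ k)
    (hjl : j ≠ l) :
    ExcPair (Xrep K n ε k l) (Xrep K n ε i j) ↔ ExcPair (Xrep K n ε i j) (Xrep K n ε k l) := by
  have hlt' : max k i < min l j := by rwa [max_comm, min_comm]
  have left_swap : max k i ∈ connectingArrows ε i j k l ↔
      max i k ∉ connectingArrows ε k l i j := by
    rw [max_mem_connectingArrows_iff hlt, max_mem_connectingArrows_iff hlt', max_comm k i]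
    split_ifs <;> omega
  have right_swap : min l j ∈ connectingArrows ε i j k l ↔
      min j l ∉ connectingArrows ε k l i j := by
    rw [min_mem_connectingArrows_iff hlt, min_mem_connectingArrows_iff hlt', min_comm l j]
    split_ifs <;> omega
  rw [excPair_Xrep_iff_xor hln hjn hlt', excPair_Xrep_iff_xor hjn hln hlt, left_swap, right_swap,
    xor_not_not]

theorem excPair_Xrep_common_left_iff (hij : i < j) (hjn : j ≤ n) (hil : i < l) (hln : l ≤ n) :
    ExcPair (Xrep K n ε i j) (Xrep K n ε i l) ↔
      (j < l ∧ ε j = false) ∨ (l < j ∧ ε l = true) := by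
  have hlt : max i i < min j l := by omega
  rw [excPair_Xrep_iff_xor hjn hln hlt, max_mem_connectingArrows_iff hlt,
    min_mem_connectingArrows_iff hlt]
  grind

theorem excPair_Xrep_common_right_iff (hij : i < j) (hkj : k < j) (hjn : j ≤ n) :
    ExcPair (Xrep K n ε i j) (Xrep K n ε k j) ↔
      (i < k ∧ ε k = false) ∨ (k < i ∧ ε i = true) := by
  have hlt : max i k < min j j := by omega
  rw [excPair_Xrep_iff_xor hjn hjn hlt, max_mem_connectingArrows_iff hlt,
    min_mem_connectingArrows_iff hlt]
  grind

theorem Cw.sharesEndpoint {c d : ℕ × ℕ} (h : Cw ε c d) : SharesEndpoint c d := by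
  unfold Cw at h
  unfold SharesEndpoint
  tauto

end ExceptionalPairs

/-- Lemma 3.5 b): `(U,V)` exceptional and `(V,U)` not exceptional iff the strand of `U`
is clockwise from the strand of `V`. -/
theorem exceptional_one_way_iff_clockwise (K : Type) [Field K] (n : ℕ) (ε : ℕ → Bool)
    (i j k l : ℕ) (hij : i < j) (hjn : j ≤ n) (hkl : k < l) (hln : l ≤ n)
    (hne : ¬(i = k ∧ j = l)) :
    (ExcPair (Xrep K n ε i j) (Xrep K n ε k l) ∧
     ¬ ExcPair (Xrep K n ε k l) (Xrep K n ε i j)) ↔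
      (SharesEndpoint (i, j) (k, l) ∧ Cw ε (i, j) (k, l)) := by
  rw [and_iff_right_of_imp Cw.sharesEndpoint]
  obtain hlt | heq | hgt := lt_trichotomy (max i k) (min j l)
  · obtain rfl | hik := eq_or_ne i k
    · rw [excPair_Xrep_common_left_iff hij hjn hkl hln,
        excPair_Xrep_common_left_iff hkl hln hij hjn]
      grind [Cw]
    obtain rfl | hjl := eq_or_ne j l
    · rw [excPair_Xrep_common_right_iff hij hkl hjn, excPair_Xrep_common_right_iff hkl hij hjn]
      grind [Cw]
    rw [excPair_Xrep_comm hjn hln hlt hik hjl]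
    grind [Cw]
  · obtain rfl | rfl : j = k ∨ l = i := by omega
    · rw [excPair_Xrep_adjacent_right_iff hij hkl hln, excPair_Xrep_adjacent_left_iff hij hkl hln]
      grind [Cw]
    · rw [excPair_Xrep_adjacent_left_iff hkl hij hjn, excPair_Xrep_adjacent_right_iff hkl hij hjn]
      grind [Cw]
  · have hVU : ExcPair (Xrep K n ε k l) (Xrep K n ε i j) :=
      excPair_Xrep_of_disjoint hln hjn (by rwa [max_comm, min_comm])
    refine iff_of_false (fun h => h.2 hVU) ?_
    grind [Cw]

end ESPaper
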